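/- Under the CFL-type condition Δt/h^α ≤ 1/(2 ε C_α (1 + 1/α − ζ(α−1))), the explicit Euler scheme for the natural condition is stable in the maximum norm: for every n ≥ 0, sup_{j ∈ ℤ} |P^{n+1}_j| ≤ sup_{j ∈ ℤ} |P^n_j| (for any bounded initial grid function P^0 vanishing for |j| ≥ J). -/

import Mathlib

open scoped BigOperators

/-- The constant `C_α = α Γ((1+α)/2) / (2^{1-α} √π Γ(1-α/2))`. -/
noncomputable def Cconst (α : ℝ) : ℝ :=
  α * Real.Gamma ((1 + α) / 2) /
    ((2 : ℝ) ^ (1 - α) * Real.sqrt Real.pi * Real.Gamma (1 - α / 2))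

/-- The real value of the Riemann zeta function at a real argument. -/
noncomputable def zetaR (s : ℝ) : ℝ := (riemannZeta (s : ℂ)).re

/-- The double-primed sum `Σ''_{k=a, k≠0}^{b} g(k)`: the sum over integers `a ≤ k ≤ b`,
omitting `k = 0`, where the end terms `k = a` and `k = b` carry weight `1/2`. -/
noncomputable def dsum (a b : ℤ) (g : ℤ → ℝ) : ℝ :=
  ∑ k ∈ (Finset.Icc a b).erase 0, (if k = a ∨ k = b then (1 : ℝ) / 2 else 1) * g k

/-!
Collecting terms, one Euler step reads `P j + ∑ k, c k * (P (j + k) - P j)`, where the weights are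
a positive multiple of the quadrature weights `|k| ^ (-(1 + α))`, with `-ζ(α - 1)` added at
`k = ±1`. If `0 ≤ c k` and `∑ k, c k ≤ 1`, the new value is a convex combination of old ones, so the
maximum norm cannot grow. Both conditions follow from the single formula
`ζ(s) = s / (s - 1) - s ∫₁^∞ {t} t ^ (-s - 1) dt`, valid for `0 < s ≠ 1`, whose integral is
nonnegative, so that `ζ(s) ≤ s / (s - 1)`. For `0 < s < 1` this makes `ζ(s)` nonpositive; the
functional equation carries this to `-2 ≤ s < 0`, so the added weights are nonnegative. For
`s = 1 + α` it bounds the sum of all quadrature weights by `2 ζ(1 + α) ≤ 2 (1 + 1 / α)`, which is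
the constant in the CFL condition.
-/

open MeasureTheory Set

section ConvexCombination

lemma add_sum_smul_sub_mem_of_convex {𝕜 E ι : Type*} [Field 𝕜] [LinearOrder 𝕜]
    [IsStrictOrderedRing 𝕜] [AddCommGroup E] [Module 𝕜 E] {s : Set E} (hs : Convex 𝕜 s)
    {t : Finset ι} {w : ι → 𝕜} {x : E} {y : ι → E} (hw : ∀ i ∈ t, 0 ≤ w i)
    (hsum : ∑ i ∈ t, w i ≤ 1) (hx : x ∈ s) (hy : ∀ i ∈ t, y i ∈ s) :
    x + ∑ i ∈ t, w i • (y i - x) ∈ s := by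
  have hmem := hs.sum_mem (t := t.insertNone) (w := fun o => o.elim (1 - ∑ i ∈ t, w i) w)
    (z := fun o => o.elim x y) (by simpa [Option.forall] using ⟨hsum, hw⟩) (by simp)
    (by simpa [Option.forall] using ⟨hx, hy⟩)
  convert hmem using 1
  simp only [Finset.sum_insertNone, Option.elim, smul_sub, Finset.sum_sub_distrib, sub_smul,
    one_smul, Finset.sum_smul]
  abel

lemma norm_add_sum_smul_sub_le {E ι : Type*} [SeminormedAddCommGroup E] [NormedSpace ℝ E]
    {t : Finset ι} {w : ι → ℝ} {x : E} {y : ι → E} {M : ℝ} (hw : ∀ i ∈ t, 0 ≤ w i)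
    (hsum : ∑ i ∈ t, w i ≤ 1) (hx : ‖x‖ ≤ M) (hy : ∀ i ∈ t, ‖y i‖ ≤ M) :
    ‖x + ∑ i ∈ t, w i • (y i - x)‖ ≤ M := by
  simp only [← mem_closedBall_zero_iff] at hx hy ⊢
  exact add_sum_smul_sub_mem_of_convex (convex_closedBall 0 M) hw hsum hx hy

end ConvexCombination

lemma mellin_ofReal (f : ℝ → ℝ) (s : ℝ) :
    mellin (fun t => (f t : ℂ)) s = ((∫ t in Ioi (0 : ℝ), t ^ (s - 1) * f t : ℝ) : ℂ) := by
  rw [mellin, ← integral_complex_ofReal]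
  refine setIntegral_congr_fun measurableSet_Ioi fun t (ht : 0 < t) => ?_
  simp only [smul_eq_mul, Complex.ofReal_mul, Complex.ofReal_cpow ht.le, Complex.ofReal_sub,
    Complex.ofReal_one]

/-- The fractional part `{t}`, cut off to `0` for `t ≤ 1`. Its Mellin transform, which converges on
`re s < 0`, continues the Riemann zeta function to `0 < re s`. -/
noncomputable def fractTail : ℝ → ℝ := (Ioi 1).indicator Int.fract

section FractTail

open Asymptotics Filter Topology

lemma fractTail_nonneg (t : ℝ) : 0 ≤ fractTail t :=
  indicator_nonneg (fun u _ => Int.fract_nonneg u) t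

lemma fractTail_le_one (t : ℝ) : fractTail t ≤ 1 :=
  indicator_le' (fun u _ => (Int.fract_lt_one u).le) (fun _ _ => zero_le_one) t

lemma norm_ofReal_fractTail_le_one (t : ℝ) : ‖(fractTail t : ℂ)‖ ≤ 1 := by
  rw [Complex.norm_of_nonneg (fractTail_nonneg t)]
  exact fractTail_le_one t

lemma locallyIntegrable_ofReal_fractTail : LocallyIntegrable fun t => (fractTail t : ℂ) := by
  have hmeas : Measurable fractTail := measurable_fract.indicator measurableSet_Ioi
  exact (locallyIntegrable_const (1 : ℝ)).mono hmeas.complex_ofReal.aestronglyMeasurable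
    (.of_forall fun t => by simpa using norm_ofReal_fractTail_le_one t)

lemma ofReal_fractTail_isBigO_atTop : (fun t => (fractTail t : ℂ)) =O[atTop] (· ^ (-(0 : ℝ))) :=
  .of_bound 1 (.of_forall fun t => by simpa using norm_ofReal_fractTail_le_one t)

lemma ofReal_fractTail_isBigO_nhdsGT_zero (b : ℝ) :
    (fun t => (fractTail t : ℂ)) =O[𝓝[>] 0] (· ^ (-b)) := by
  refine EventuallyEq.trans_isBigO ?_ (isBigO_zero _ _)
  filter_upwards [Ioo_mem_nhdsGT zero_lt_one] with t ht
  simp [fractTail, ht.2.le]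

lemma mellinConvergent_fractTail {s : ℂ} (hs : s.re < 0) :
    MellinConvergent (fun t => (fractTail t : ℂ)) s :=
  mellinConvergent_of_isBigO_rpow (locallyIntegrable_ofReal_fractTail.locallyIntegrableOn _)
    ofReal_fractTail_isBigO_atTop hs (ofReal_fractTail_isBigO_nhdsGT_zero _) (sub_one_lt s.re)

lemma differentiableAt_mellin_fractTail {s : ℂ} (hs : s.re < 0) :
    DifferentiableAt ℂ (mellin fun t => (fractTail t : ℂ)) s :=
  mellin_differentiableAt_of_isBigO_rpow (locallyIntegrable_ofReal_fractTail.locallyIntegrableOn _)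
    ofReal_fractTail_isBigO_atTop hs (ofReal_fractTail_isBigO_nhdsGT_zero _) (sub_one_lt s.re)

lemma ofReal_fractTail_of_one_lt {t : ℝ} (ht : 1 < t) : (fractTail t : ℂ) = t - ⌊t⌋₊ := by
  rw [fractTail, indicator_of_mem (mem_Ioi.2 ht), ← Int.self_sub_floor, Complex.ofReal_sub,
    ← natCast_floor_eq_intCast_floor (zero_le_one.trans ht.le), Complex.ofReal_natCast]

lemma mellin_fractTail (s : ℂ) :
    mellin (fun t => (fractTail t : ℂ)) s =
      ∫ t in Ioi (1 : ℝ), (t : ℂ) ^ (s - 1) * fractTail t := by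
  refine setIntegral_eq_of_subset_of_forall_sdiff_eq_zero measurableSet_Ioi
    (Ioi_subset_Ioi zero_le_one) fun t ht => ?_
  simp [fractTail, indicator_of_notMem ht.2]

lemma integral_floor_mul_cpow {s : ℂ} (hs : 1 < s.re) :
    ∫ t in Ioi (1 : ℝ), (⌊t⌋₊ : ℂ) * (t : ℂ) ^ (-(s + 1)) =
      1 / (s - 1) - mellin (fun t => (fractTail t : ℂ)) (-s) := by
  have hre : (-s).re < -1 := by simpa using hs
  have hint : IntegrableOn (fun t : ℝ => (t : ℂ) ^ (-s)) (Ioi 1) :=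
    integrableOn_Ioi_cpow_of_lt hre one_pos
  have hfract : IntegrableOn (fun t : ℝ => (t : ℂ) ^ (-s - 1) * fractTail t) (Ioi 1) :=
    (mellinConvergent_fractTail (hre.trans neg_one_lt_zero)).mono_set (Ioi_subset_Ioi zero_le_one)
  have hpow : ∫ t in Ioi (1 : ℝ), (t : ℂ) ^ (-s) = 1 / (s - 1) := by
    rw [integral_Ioi_cpow_of_lt hre one_pos, Complex.ofReal_one, Complex.one_cpow, neg_add_eq_sub,
      ← neg_sub s 1, neg_div_neg_eq]
  rw [← hpow, mellin_fractTail, ← integral_sub hint hfract]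
  refine setIntegral_congr_fun measurableSet_Ioi fun t (ht : 1 < t) => ?_
  have ht0 : (t : ℂ) ≠ 0 := by exact_mod_cast (one_pos.trans ht).ne'
  have hsplit : (t : ℂ) ^ (-s) = t * (t : ℂ) ^ (-s - 1) := by
    rw [Complex.cpow_sub _ _ ht0, Complex.cpow_one, mul_div_cancel₀ _ ht0]
  simp only [ofReal_fractTail_of_one_lt ht, hsplit, neg_add']
  ring

end FractTail

section RiemannZeta

lemma riemannZeta_eq_sub_mellin_fractTail_of_one_lt_re {s : ℂ} (hs : 1 < s.re) :
    riemannZeta s = s / (s - 1) - s * mellin (fun t => (fractTail t : ℂ)) (-s) := by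
  have hpartial : (fun n : ℕ => ∑ k ∈ Finset.Icc 1 n, (1 : ℕ → ℂ) k) =O[Filter.atTop]
      fun n => (n : ℝ) ^ (1 : ℝ) :=
    .of_bound 1 (.of_forall fun n => by simp)
  have habel := LSeries_eq_mul_integral 1 zero_le_one hs (LSeriesSummable_one_iff.2 hs) hpartial
  simp only [LSeries_one_eq_riemannZeta hs, Pi.one_apply, Finset.sum_const, Nat.card_Icc,
    Nat.add_sub_cancel, nsmul_eq_mul, mul_one] at habel
  rw [habel, integral_floor_mul_cpow hs, mul_sub, mul_one_div]

lemma riemannZeta₀_eq_one_sub_mellin_fractTail {s : ℂ} (hs : 0 < s.re) :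
    riemannZeta₀ s = 1 - s * mellin (fun t => (fractTail t : ℂ)) (-s) := by
  set H : Set ℂ := {z | 0 < z.re}
  have hopen (a : ℝ) : IsOpen {z : ℂ | a < z.re} := isOpen_lt continuous_const Complex.continuous_re
  have hleft : AnalyticOnNhd ℂ riemannZeta₀ H :=
    differentiable_riemannZeta₀.differentiableOn.analyticOnNhd (hopen 0)
  have hright : AnalyticOnNhd ℂ (fun z => 1 - z * mellin (fun t => (fractTail t : ℂ)) (-z)) H := by
    refine DifferentiableOn.analyticOnNhd (fun z (hz : 0 < z.re) => ?_) (hopen 0)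
    have hmellin := (differentiableAt_mellin_fractTail (s := -z) (by simpa using hz)).comp z
      differentiableAt_id.neg
    exact ((differentiableAt_id.mul hmellin).const_sub 1).differentiableWithinAt
  refine hleft.eqOn_of_preconnected_of_eventuallyEq hright
    (convex_halfSpace_re_gt 0).isPreconnected (z₀ := 2) (by simp [H]) ?_ hs
  filter_upwards [(hopen 1).mem_nhds (show (1 : ℝ) < (2 : ℂ).re by simp)] with z (hz : 1 < z.re)
  have hz1 : z ≠ 1 := by rintro rfl; simp at hz
  have hz0 : z - 1 ≠ 0 := sub_ne_zero.2 hz1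
  have hzeta := riemannZeta_eq_sub_mellin_fractTail_of_one_lt_re hz
  rw [riemannZeta_eq_inv_sub_add hz1] at hzeta
  linear_combination hzeta + div_self hz0

lemma ofReal_zetaR (s : ℝ) : (zetaR s : ℂ) = riemannZeta s :=
  Complex.conj_eq_iff_re.1 (by rw [← riemannZeta_conj, Complex.conj_ofReal])

lemma zetaR_eq_sub_integral_fractTail {s : ℝ} (hs : 0 < s) (hs1 : s ≠ 1) :
    zetaR s = s / (s - 1) - s * ∫ t in Ioi (0 : ℝ), t ^ (-s - 1) * fractTail t := by
  have hs1' : (s : ℂ) ≠ 1 := by exact_mod_cast hs1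
  have hne : (s : ℂ) - 1 ≠ 0 := sub_ne_zero.2 hs1'
  have hzeta := riemannZeta_eq_inv_sub_add hs1'
  rw [riemannZeta₀_eq_one_sub_mellin_fractTail (by simpa using hs), ← Complex.ofReal_neg,
    mellin_ofReal, ← ofReal_zetaR] at hzeta
  rw [← Complex.ofReal_inj]
  push_cast
  linear_combination hzeta - div_self hne

lemma zetaR_le_div_sub_one {s : ℝ} (hs : 0 < s) (hs1 : s ≠ 1) : zetaR s ≤ s / (s - 1) := by
  have hint : 0 ≤ ∫ t in Ioi (0 : ℝ), t ^ (-s - 1) * fractTail t :=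
    setIntegral_nonneg measurableSet_Ioi fun t (ht : 0 < t) =>
      mul_nonneg (Real.rpow_nonneg ht.le _) (fractTail_nonneg t)
  rw [zetaR_eq_sub_integral_fractTail hs hs1]
  exact sub_le_self _ (mul_nonneg hs.le hint)

lemma zetaR_one_sub {s : ℝ} (hs : ∀ n : ℕ, s ≠ -n) (hs1 : s ≠ 1) :
    zetaR (1 - s) =
      2 * (2 * Real.pi) ^ (-s) * Real.Gamma s * Real.cos (Real.pi * s / 2) * zetaR s := by
  rw [← Complex.ofReal_inj]
  push_cast [ofReal_zetaR, Complex.ofReal_cpow Real.two_pi_pos.le, ← Complex.Gamma_ofReal]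
  exact riemannZeta_one_sub (fun n => by exact_mod_cast hs n) (by exact_mod_cast hs1)

lemma zetaR_nonpos {s : ℝ} (hs : -2 ≤ s) (hs1 : s < 1) : zetaR s ≤ 0 := by
  rcases lt_trichotomy s 0 with hneg | rfl | hpos
  · have hcos : Real.cos (Real.pi * (1 - s) / 2) ≤ 0 :=
      Real.cos_nonpos_of_pi_div_two_le_of_le (by nlinarith [Real.pi_pos])
        (by nlinarith [Real.pi_pos])
    have hΓ := Real.Gamma_pos_of_pos (show 0 < 1 - s by linarith)
    rw [← sub_sub_cancel 1 s, zetaR_one_sub (fun n => by linarith [n.cast_nonneg (α := ℝ)])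
      (by linarith)]
    exact mul_nonpos_of_nonpos_of_nonneg
      (mul_nonpos_of_nonneg_of_nonpos (mul_nonneg (by positivity) hΓ.le) hcos)
      (riemannZeta_re_pos_of_one_lt (by linarith)).le
  · norm_num [zetaR, riemannZeta_zero]
  · exact (zetaR_le_div_sub_one hpos hs1.ne).trans
      (div_nonpos_of_nonneg_of_nonpos hpos.le (by linarith))

lemma hasSum_one_div_nat_add_one_rpow {s : ℝ} (hs : 1 < s) :
    HasSum (fun n : ℕ => 1 / ((n : ℝ) + 1) ^ s) (zetaR s) := by
  have hsum : Summable fun n : ℕ => 1 / ((n : ℝ) + 1) ^ s := by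
    exact_mod_cast (summable_nat_add_iff 1).2 (Real.summable_one_div_nat_rpow.2 hs)
  convert hsum.hasSum
  rw [← Complex.ofReal_inj, ofReal_zetaR, zeta_eq_tsum_one_div_nat_add_one_cpow (by simpa using hs),
    Complex.ofReal_tsum]
  refine tsum_congr fun n => ?_
  push_cast [Complex.ofReal_cpow (n.cast_add_one_pos (α := ℝ)).le]
  rfl

lemma hasSum_one_div_abs_int_rpow {s : ℝ} (hs : 1 < s) :
    HasSum (fun k : ℤ => 1 / |(k : ℝ)| ^ s) (2 * zetaR s) := by
  have hnat := hasSum_one_div_nat_add_one_rpow hs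
  have habs (n : ℕ) : |(n : ℝ) + 1| = n + 1 := abs_of_pos n.cast_add_one_pos
  convert HasSum.of_add_one_of_neg_add_one (f := fun k : ℤ => 1 / |(k : ℝ)| ^ s)
    (m := zetaR s) (m' := zetaR s) ?_ ?_ using 1
  · simp [Real.zero_rpow (one_pos.trans hs).ne', two_mul]
  · simpa [habs] using hnat
  · push_cast
    simpa only [abs_neg, habs] using hnat

lemma sum_one_div_abs_int_rpow_le {s : ℝ} (hs : 1 < s) (t : Finset ℤ) :
    ∑ k ∈ t, 1 / |(k : ℝ)| ^ s ≤ 2 * (s / (s - 1)) :=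
  calc ∑ k ∈ t, 1 / |(k : ℝ)| ^ s ≤ 2 * zetaR s :=
        sum_le_hasSum t (fun k _ => by positivity) (hasSum_one_div_abs_int_rpow hs)
    _ ≤ 2 * (s / (s - 1)) := by gcongr; exact zetaR_le_div_sub_one (one_pos.trans hs) hs.ne'

end RiemannZeta

section Stencil

variable {α : ℝ} {a b : ℤ}

lemma sum_erase_zero_ite_abs_eq_one {M : Type*} [AddCommMonoid M] (ha : a ≤ -1) (hb : 1 ≤ b)
    (g : ℤ → M) :
    ∑ k ∈ (Finset.Icc a b).erase 0, (if |k| = 1 then g k else 0) = g (-1) + g 1 := by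
  have hfilter : {k ∈ (Finset.Icc a b).erase 0 | |k| = 1} = {-1, 1} := by
    ext k
    simp only [Finset.mem_filter, Finset.mem_erase, Finset.mem_Icc, Finset.mem_insert,
      Finset.mem_singleton]
    grind
  rw [← Finset.sum_filter, hfilter, Finset.sum_pair (by norm_num)]

/-- The coefficient with which `u (j + k) - u j` enters the discretised operator, up to the factor
`h ^ (-α)`: the double-primed quadrature weight on `a ≤ k ≤ b`, together with the coefficient
`-ζ(α - 1)` of the second difference at `k = ±1`. -/
noncomputable def stencilWeight (α : ℝ) (a b k : ℤ) : ℝ :=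
  (if k = a ∨ k = b then (1 : ℝ) / 2 else 1) * (1 / |(k : ℝ)| ^ (1 + α)) -
    if |k| = 1 then zetaR (α - 1) else 0

lemma stencilWeight_nonneg (hα : -1 ≤ α) (hα2 : α < 2) (a b k : ℤ) :
    0 ≤ stencilWeight α a b k := by
  have hζ : zetaR (α - 1) ≤ 0 := zetaR_nonpos (by linarith) (by linarith)
  have hlocal : (if |k| = 1 then zetaR (α - 1) else 0) ≤ 0 := by split_ifs <;> simp [hζ]
  exact sub_nonneg.2 (hlocal.trans (by positivity))

lemma sum_stencilWeight_le (hα : 0 < α) (ha : a ≤ -1) (hb : 1 ≤ b) :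
    ∑ k ∈ (Finset.Icc a b).erase 0, stencilWeight α a b k ≤ 2 * (1 + 1 / α - zetaR (α - 1)) := by
  have hquad : ∑ k ∈ (Finset.Icc a b).erase 0,
      (if k = a ∨ k = b then (1 : ℝ) / 2 else 1) * (1 / |(k : ℝ)| ^ (1 + α)) ≤ 2 * (1 + 1 / α) :=
    calc _ ≤ ∑ k ∈ (Finset.Icc a b).erase 0, 1 / |(k : ℝ)| ^ (1 + α) :=
          Finset.sum_le_sum fun k _ =>
            mul_le_of_le_one_left (by positivity) (by split_ifs <;> norm_num)
      _ ≤ 2 * ((1 + α) / (1 + α - 1)) := sum_one_div_abs_int_rpow_le (by linarith) _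
      _ = 2 * (1 + 1 / α) := by rw [add_sub_cancel_left, add_div, div_self hα.ne', add_comm]
  simp only [stencilWeight, Finset.sum_sub_distrib,
    sum_erase_zero_ite_abs_eq_one ha hb fun _ => zetaR (α - 1)]
  linarith

lemma mul_div_abs_mul_rpow_one_add {h : ℝ} (hh : 0 < h) (α x y : ℝ) :
    h * (y / |x * h| ^ (1 + α)) = h ^ (-α) * (1 / |x| ^ (1 + α) * y) := by
  rw [abs_mul, abs_of_pos hh, Real.mul_rpow (abs_nonneg x) hh.le, Real.rpow_add hh, Real.rpow_one,
    Real.rpow_neg hh.le]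
  field_simp

lemma euler_step_eq_add_sum_stencilWeight {h : ℝ} (hh : 0 < h) (ha : a ≤ -1) (hb : 1 ≤ b)
    (α c : ℝ) (u : ℤ → ℝ) (j : ℤ) :
    u j - c * zetaR (α - 1) * h ^ (-α) * (u (j - 1) - 2 * u j + u (j + 1)) +
        c * h * dsum a b (fun k => (u (j + k) - u j) / |(k : ℝ) * h| ^ (1 + α)) =
      u j + ∑ k ∈ (Finset.Icc a b).erase 0,
        (c * h ^ (-α) * stencilWeight α a b k) • (u (j + k) - u j) := by
  have hquad : h * dsum a b (fun k => (u (j + k) - u j) / |(k : ℝ) * h| ^ (1 + α)) =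
      h ^ (-α) * dsum a b fun k => 1 / |(k : ℝ)| ^ (1 + α) * (u (j + k) - u j) := by
    simp only [dsum, Finset.mul_sum, mul_left_comm _ (ite _ _ _), mul_div_abs_mul_rpow_one_add hh]
  have hlocal := sum_erase_zero_ite_abs_eq_one ha hb fun k => zetaR (α - 1) * (u (j + k) - u j)
  simp only [stencilWeight, smul_eq_mul, mul_assoc, ← Finset.mul_sum, sub_mul,
    Finset.sum_sub_distrib, ite_mul, zero_mul] at hlocal ⊢
  rw [hlocal, hquad, ← sub_eq_add_neg]
  simp only [dsum, ite_mul]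
  ring

end Stencil

section Stability

lemma Cconst_pos {α : ℝ} (hα : 0 < α) (hα2 : α < 2) : 0 < Cconst α := by
  have hden : 0 < Real.Gamma (1 - α / 2) := Real.Gamma_pos_of_pos (by linarith)
  unfold Cconst
  positivity

lemma mul_sum_stencilWeight_le_one {α ε h Δt : ℝ} {a b : ℤ} (hα : 0 < α) (hα2 : α < 2)
    (hε : 0 < ε) (hh : 0 < h) (hΔt : 0 ≤ Δt) (ha : a ≤ -1) (hb : 1 ≤ b)
    (hCFL : Δt / h ^ α ≤ 1 / (2 * ε * Cconst α * (1 + 1 / α - zetaR (α - 1)))) :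
    ∑ k ∈ (Finset.Icc a b).erase 0, Δt * ε * Cconst α * h ^ (-α) * stencilWeight α a b k ≤ 1 := by
  have hC := Cconst_pos hα hα2
  have hζ : 0 < 1 + 1 / α - zetaR (α - 1) := by
    have := zetaR_nonpos (s := α - 1) (by linarith) (by linarith)
    have : 0 < 1 / α := by positivity
    linarith
  rw [le_div_iff₀ (by positivity)] at hCFL
  calc _ = Δt * ε * Cconst α * h ^ (-α) *
          ∑ k ∈ (Finset.Icc a b).erase 0, stencilWeight α a b k := by rw [Finset.mul_sum]
    _ ≤ Δt * ε * Cconst α * h ^ (-α) * (2 * (1 + 1 / α - zetaR (α - 1))) := by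
        gcongr; exact sum_stencilWeight_le hα ha hb
    _ = Δt / h ^ α * (2 * ε * Cconst α * (1 + 1 / α - zetaR (α - 1))) := by
        rw [Real.rpow_neg hh.le]; ring
    _ ≤ 1 := hCFL

lemma finite_range_of_eq_zero_of_le_abs {M : Type*} [Zero M] {u : ℤ → M} {J : ℤ}
    (hu : ∀ j, J ≤ |j| → u j = 0) : (range u).Finite := by
  refine (((finite_Icc (-J) J).image u).insert 0).subset ?_
  rintro _ ⟨j, rfl⟩
  rcases le_or_gt J |j| with hout | hin
  · exact .inl (hu j hout)
  · exact .inr ⟨j, abs_le.1 hin.le, rfl⟩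

end Stability

/-- Maximum-norm stability of the explicit Euler scheme for the natural condition. -/
theorem stmt_9 (α ε h Δt : ℝ) (J : ℤ)
    (hα : 0 < α) (hα2 : α < 2) (hε : 0 < ε) (hJ : 1 ≤ J)
    (hh : 0 < h) (hΔt : 0 < Δt)
    (P : ℕ → ℤ → ℝ)
    (hbc : ∀ n : ℕ, ∀ j : ℤ, J ≤ |j| → P n j = 0)
    (hscheme : ∀ n : ℕ, ∀ j : ℤ, |j| < J →
      P (n + 1) j =
        P n j
          - Δt * ε * Cconst α * zetaR (α - 1) * h ^ (-α) *
              (P n (j - 1) - 2 * P n j + P n (j + 1))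
          + Δt * ε * Cconst α * h *
              dsum (-J - j) (J - j)
                (fun k => (P n (j + k) - P n j) / |(k : ℝ) * h| ^ (1 + α)))
    (hCFL : Δt / h ^ α ≤ 1 / (2 * ε * Cconst α * (1 + 1 / α - zetaR (α - 1)))) :
    ∀ n : ℕ, (⨆ j : ℤ, |P (n + 1) j|) ≤ ⨆ j : ℤ, |P n j| := by
  intro n
  have hfin : (range fun j => |P n j|).Finite :=
    finite_range_of_eq_zero_of_le_abs fun j hj => abs_eq_zero.2 (hbc n j hj)
  have hle : ∀ j, |P n j| ≤ ⨆ i, |P n i| := le_ciSup hfin.bddAbove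
  refine ciSup_le fun j => ?_
  rcases le_or_gt J |j| with hout | hin
  · rw [hbc (n + 1) j hout, abs_zero]
    exact (abs_nonneg _).trans (hle j)
  · obtain ⟨hJj, hjJ⟩ := abs_lt.1 hin
    have ha : -J - j ≤ -1 := by omega
    have hb : 1 ≤ J - j := by omega
    rw [hscheme n j hin, euler_step_eq_add_sum_stencilWeight hh ha hb]
    have hC := Cconst_pos hα hα2
    exact norm_add_sum_smul_sub_le (E := ℝ)
      (fun k _ => mul_nonneg (by positivity) (stencilWeight_nonneg (by linarith) hα2 _ _ k))
      (mul_sum_stencilWeight_le_one hα hα2 hε hh hΔt.le ha hb hCFL) (hle j)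
      (fun k _ => hle (j + k))
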